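/- Let $r, t, d$ be real numbers with $r > 6$. Define $a_1 = t(r-2) - d$, $b_1 = t$, and recursively $a_{n+1} = (r-5)a_n + (r-6)b_n$, $b_{n+1} = a_n + b_n$ for $n \ge 1$, and set $v_n = a_n + b_n$. Then there exists $\varepsilon > 0$ such that for every real $s$ with $|s| < \varepsilon$, the quantity $1 - (r-4)s + s^2$ is nonzero and $\sum_{n=1}^{\infty} v_n s^n$ converges to $R(s) := \dfrac{(s - (r-4)s^2)v_1 + s^2 v_2}{1 - (r-4)s + s^2}$; moreover, the same rational expression evaluated at $s = 1$ satisfies $\dfrac{tr - 2t - d - 6}{r-6} + R(1) = \dfrac{-6}{r-6}$. -/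

import Mathlib

/-- For `r > 6`, with `a₁ = t(r-2) - d`, `b₁ = t`,
`a (n+1) = (r-5) a n + (r-6) b n`, `b (n+1) = a n + b n`, and `v n = a n + b n`,
there exists `ε > 0` such that for `|s| < ε` the denominator `1 - (r-4)s + s²` is
nonzero and `∑_{n ≥ 1} v n * s^n` converges to
`R(s) = ((s - (r-4)s²) v₁ + s² v₂) / (1 - (r-4)s + s²)`; moreover
`(tr - 2t - d - 6)/(r-6) + R(1) = -6/(r-6)`. -/
theorem vertex_generating_function (r t d : ℝ) (hr : r > 6)
    (a b v : ℕ → ℝ)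
    (ha₁ : a 1 = t * (r - 2) - d) (hb₁ : b 1 = t)
    (ha : ∀ n ≥ 1, a (n + 1) = (r - 5) * a n + (r - 6) * b n)
    (hb : ∀ n ≥ 1, b (n + 1) = a n + b n)
    (hv : ∀ n, v n = a n + b n) :
    (∃ ε > 0, ∀ s : ℝ, |s| < ε →
      1 - (r - 4) * s + s ^ 2 ≠ 0 ∧
      HasSum (fun n : ℕ => v (n + 1) * s ^ (n + 1))
        (((s - (r - 4) * s ^ 2) * v 1 + s ^ 2 * v 2) / (1 - (r - 4) * s + s ^ 2))) ∧
    (t * r - 2 * t - d - 6) / (r - 6) +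
        ((1 - (r - 4) * 1 ^ 2) * v 1 + 1 ^ 2 * v 2) / (1 - (r - 4) * 1 + 1 ^ 2) =
      -6 / (r - 6) := by
  have hrec : ∀ n, v (n + 3) = (r - 4) * v (n + 2) - v (n + 1) := by
    intro n
    have h1 := ha (n + 1) (by omega)
    have h2 := ha (n + 2) (by omega)
    have h3 := hb (n + 1) (by omega)
    have h4 := hb (n + 2) (by omega)
    simp only [add_assoc, Nat.reduceAdd] at h1 h2 h3 h4
    rw [hv, hv, hv, h2, h4, h1, h3]
    ring
  refine ⟨⟨1 / (r - 3), by apply one_div_pos.mpr; linarith, ?_⟩, ?_⟩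
  · intro s hs
    have hM : 0 < r - 3 := by linarith
    rw [lt_div_iff₀ hM] at hs
    have hs0 := abs_nonneg s
    have hD : 0 < 1 - (r - 4) * s + s ^ 2 := by
      have : (r - 4) * s ≤ (r - 4) * |s| :=
        mul_le_mul_of_nonneg_left (le_abs_self s) (by linarith)
      nlinarith [sq_nonneg s]
    refine ⟨hD.ne', ?_⟩
    obtain ⟨C, hC⟩ : ∃ C, C = |v 1| + |v 2| := ⟨_, rfl⟩
    have hC0 : 0 ≤ C := by rw [hC]; positivity
    have hbound : ∀ n, |v (n + 1)| ≤ C * (r - 3) ^ n ∧ |v (n + 2)| ≤ C * (r - 3) ^ (n + 1) := by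
      intro n
      induction n with
      | zero =>
        have h1 := abs_nonneg (v 1)
        have h2 := abs_nonneg (v 2)
        refine ⟨by simp [hC], ?_⟩
        simp only [zero_add, pow_one]
        nlinarith
      | succ n ih =>
        obtain ⟨h1, h2⟩ := ih
        refine ⟨h2, ?_⟩
        have e : n + 1 + 2 = n + 3 := rfl
        rw [e, hrec]
        have hp : 0 ≤ C * (r - 3) ^ n := by positivity
        calc |(r - 4) * v (n + 2) - v (n + 1)| ≤ |(r - 4) * v (n + 2)| + |v (n + 1)| := abs_sub _ _
          _ = (r - 4) * |v (n + 2)| + |v (n + 1)| := by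
            rw [abs_mul, abs_of_pos (by linarith : 0 < r - 4)]
          _ ≤ (r - 4) * (C * (r - 3) ^ (n + 1)) + C * (r - 3) ^ n := by
            have : 0 ≤ r - 4 := by linarith
            gcongr
          _ ≤ C * (r - 3) ^ (n + 1 + 1) := by
            have : C * (r - 3) ^ (n + 1 + 1) - ((r - 4) * (C * (r - 3) ^ (n + 1)) + C * (r - 3) ^ n)
              = (C * (r - 3) ^ n) * (r - 4) := by ring
            have : 0 ≤ (C * (r - 3) ^ n) * (r - 4) := mul_nonneg hp (by linarith)
            linarith
    have hsum : Summable (fun n : ℕ => v (n + 1) * s ^ (n + 1)) := by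
      refine Summable.of_norm_bounded (g := fun n => (C * |s|) * (|s| * (r - 3)) ^ n)
        ((summable_geometric_of_lt_one (by positivity) hs).mul_left _) ?_
      intro n
      rw [Real.norm_eq_abs, abs_mul, abs_pow]
      calc |v (n + 1)| * |s| ^ (n + 1) ≤ (C * (r - 3) ^ n) * |s| ^ (n + 1) := by
            gcongr
            exact (hbound n).1
        _ = _ := by rw [mul_pow]; ring
    obtain ⟨S, hS⟩ := hsum
    have h1 := (hasSum_nat_add_iff' 1).mpr hS
    have h2 := (hasSum_nat_add_iff' 2).mpr hS
    have h3 := (h1.mul_left ((r - 4) * s)).sub (hS.mul_left (s ^ 2))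
    have hfun : (fun n : ℕ => v (n + 2 + 1) * s ^ (n + 2 + 1)) = fun n : ℕ =>
        (r - 4) * s * (v (n + 1 + 1) * s ^ (n + 1 + 1)) - s ^ 2 * (v (n + 1) * s ^ (n + 1)) := by
      funext n
      have e : v (n + 2 + 1) = (r - 4) * v (n + 1 + 1) - v (n + 1) := hrec n
      rw [e]
      ring
    rw [hfun] at h2
    have h4 := h2.unique h3
    simp only [Finset.sum_range_succ, Finset.sum_range_zero, zero_add, Nat.reduceAdd, pow_one] at h4
    convert hS using 1
    rw [div_eq_iff hD.ne']
    linear_combination -h4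
  · have h1 := ha 1 le_rfl
    have h2 := hb 1 le_rfl
    norm_num at h1 h2
    have h6 : r - 6 ≠ 0 := by linarith
    have e : 1 - (r - 4) * 1 + 1 ^ 2 = -(r - 6) := by ring
    rw [e, div_neg, ← sub_eq_add_neg, ← sub_div, hv, hv, h1, h2, ha₁, hb₁]
    congr 1
    ring
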